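/- arXiv:1302.5535 — 2 statements merged into one kernel-verified Lean document; each statement's English description precedes it below -/
import Mathlib

section
/- Let A ∈ ℝ^{n×n} be nonsingular and let 1 ≤ k ≤ d(A) − 1. Then the k-th worst-case GMRES approximations of A and of its transpose coincide: Ψ_k(A) = Ψ_k(Aᵀ). -/
open Polynomial Matrix

/-- The Euclidean norm of a real vector. -/
noncomputable def euclNorm {ι : Type*} [Fintype ι] (v : ι → ℝ) : ℝ :=
  Real.sqrt (∑ i, v i ^ 2)

/-- The Euclidean norm of a complex vector. -/
noncomputable def euclNormC {ι : Type*} [Fintype ι] (v : ι → ℂ) : ℝ :=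
  Real.sqrt (∑ i, ‖v i‖ ^ 2)

/-- The Euclidean inner product of two real vectors. -/
noncomputable def edot {ι : Type*} [Fintype ι] (u v : ι → ℝ) : ℝ := ∑ i, u i * v i

/-- `p ∈ π_k`: real polynomials of degree at most `k` with value `1` at the origin. -/
def IsPik (k : ℕ) (p : Polynomial ℝ) : Prop := p.natDegree ≤ k ∧ p.eval 0 = 1

/-- `p ∈ π_{k,ℂ}`: complex polynomials of degree at most `k` with value `1` at the origin. -/
def IsPikC (k : ℕ) (p : Polynomial ℂ) : Prop := p.natDegree ≤ k ∧ p.eval 0 = 1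

/-- The `k`-th GMRES residual norm `min_{p ∈ π_k} ‖p(A)v‖`. -/
noncomputable def gmresVal {ι : Type*} [Fintype ι] [DecidableEq ι]
    (A : Matrix ι ι ℝ) (k : ℕ) (v : ι → ℝ) : ℝ :=
  sInf {s : ℝ | ∃ p : Polynomial ℝ, IsPik k p ∧ s = euclNorm ((Polynomial.aeval A p).mulVec v)}

/-- The `k`-th worst-case GMRES approximation `Ψ_k(A) = max_{‖v‖=1} min_{p ∈ π_k} ‖p(A)v‖`. -/
noncomputable def Psi {ι : Type*} [Fintype ι] [DecidableEq ι]
    (A : Matrix ι ι ℝ) (k : ℕ) : ℝ :=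
  sSup {r : ℝ | ∃ v : ι → ℝ, euclNorm v = 1 ∧ r = gmresVal A k v}

/-- `d(A)`: the degree of the minimal polynomial of `A`. -/
noncomputable def dA {ι : Type*} [Fintype ι] [DecidableEq ι] (A : Matrix ι ι ℝ) : ℕ :=
  (minpoly ℝ A).natDegree

/-- `d(A,b)`: the smallest degree of a nonzero polynomial `q` with `q(A)b = 0`. -/
noncomputable def dAb {ι : Type*} [Fintype ι] [DecidableEq ι]
    (A : Matrix ι ι ℝ) (b : ι → ℝ) : ℕ :=
  sInf {d : ℕ | ∃ q : Polynomial ℝ, q ≠ 0 ∧ q.natDegree = d ∧ (Polynomial.aeval A q).mulVec b = 0}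

/-- `r = GMRES(A,b,k)`: `r = p(A)b` for some `p ∈ π_k` minimizing `‖p(A)b‖` over `π_k`. -/
def IsGmresRes {ι : Type*} [Fintype ι] [DecidableEq ι]
    (A : Matrix ι ι ℝ) (k : ℕ) (b r : ι → ℝ) : Prop :=
  ∃ p : Polynomial ℝ, IsPik k p ∧ r = (Polynomial.aeval A p).mulVec b ∧
    ∀ q : Polynomial ℝ, IsPik k q → euclNorm r ≤ euclNorm ((Polynomial.aeval A q).mulVec b)

/-- `p` is the `k`-th GMRES polynomial of `A` and `b`: `p ∈ π_k` minimizes `‖p(A)b‖`. -/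
def IsGmresPoly {ι : Type*} [Fintype ι] [DecidableEq ι]
    (A : Matrix ι ι ℝ) (k : ℕ) (b : ι → ℝ) (p : Polynomial ℝ) : Prop :=
  IsPik k p ∧ ∀ q : Polynomial ℝ, IsPik k q →
    euclNorm ((Polynomial.aeval A p).mulVec b) ≤ euclNorm ((Polynomial.aeval A q).mulVec b)

/-- The Krylov subspace `K_k(A,b) = span{b, Ab, …, A^{k-1}b}`. -/
noncomputable def krylov {ι : Type*} [Fintype ι] [DecidableEq ι]
    (A : Matrix ι ι ℝ) (k : ℕ) (b : ι → ℝ) : Submodule ℝ (ι → ℝ) :=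
  Submodule.span ℝ (Set.range fun i : Fin k => (A ^ (i : ℕ)).mulVec b)

/-- `b` satisfies the cross equality for `A` and step `k`. -/
def CrossEq {ι : Type*} [Fintype ι] [DecidableEq ι]
    (A : Matrix ι ι ℝ) (k : ℕ) (b : ι → ℝ) : Prop :=
  ∀ r s : ι → ℝ, IsGmresRes A k b r → IsGmresRes Aᵀ k ((euclNorm r)⁻¹ • r) s →
    b = (euclNorm s)⁻¹ • s

/-- The Krylov matrix `K(v) = [Av, A²v, …, A^k v]`. -/
noncomputable def Kmat {n : ℕ} (A : Matrix (Fin n) (Fin n) ℝ) (k : ℕ) (v : Fin n → ℝ) :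
    Matrix (Fin n) (Fin k) ℝ :=
  Matrix.of fun i j => (A ^ ((j : ℕ) + 1)).mulVec v i

/-- `γ(v) = (K(v)ᵀK(v))⁻¹ K(v)ᵀ v`. -/
noncomputable def gammaVec {n : ℕ} (A : Matrix (Fin n) (Fin n) ℝ) (k : ℕ) (v : Fin n → ℝ) :
    Fin k → ℝ :=
  ((Kmat A k v)ᵀ * Kmat A k v)⁻¹ *ᵥ ((Kmat A k v)ᵀ *ᵥ v)

/-- `g(v) = min_{c ∈ ℝ^k} ‖v - K(v)c‖²`. -/
noncomputable def gFun {n : ℕ} (A : Matrix (Fin n) (Fin n) ℝ) (k : ℕ) (v : Fin n → ℝ) : ℝ :=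
  sInf {s : ℝ | ∃ c : Fin k → ℝ, s = euclNorm (v - Kmat A k v *ᵥ c) ^ 2}

/-- `p(z; c) = 1 - ∑_{j=1}^k c_j z^j`. -/
noncomputable def pPoly {k : ℕ} (c : Fin k → ℝ) : Polynomial ℝ :=
  1 - ∑ j : Fin k, Polynomial.C (c j) * Polynomial.X ^ ((j : ℕ) + 1)

/-- `f(c,v) = ‖p(A;c)v‖²`. -/
noncomputable def fFun {n k : ℕ} (A : Matrix (Fin n) (Fin n) ℝ) (c : Fin k → ℝ)
    (v : Fin n → ℝ) : ℝ :=
  euclNorm ((Polynomial.aeval A (pPoly c)).mulVec v) ^ 2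

/-- `F(c,v) = f(c,v)/(vᵀv)`. -/
noncomputable def FFun {n k : ℕ} (A : Matrix (Fin n) (Fin n) ℝ) (c : Fin k → ℝ)
    (v : Fin n → ℝ) : ℝ :=
  fFun A c v / edot v v

/-- The Toh matrix `A(ω, ε)`. -/
noncomputable def tohMatrix (ω ε : ℝ) : Matrix (Fin 4) (Fin 4) ℝ :=
  !![1, ε, 0, 0; 0, -1, ω / ε, 0; 0, 0, 1, ε; 0, 0, 0, -1]

/-- `p` is a `k`-th worst-case GMRES polynomial of `A`. -/
def IsWCPoly {ι : Type*} [Fintype ι] [DecidableEq ι]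
    (A : Matrix ι ι ℝ) (k : ℕ) (p : Polynomial ℝ) : Prop :=
  IsPik k p ∧ ∃ b : ι → ℝ, euclNorm b = 1 ∧
    (∀ q : Polynomial ℝ, IsPik k q →
      euclNorm ((Polynomial.aeval A p).mulVec b) ≤ euclNorm ((Polynomial.aeval A q).mulVec b)) ∧
    euclNorm ((Polynomial.aeval A p).mulVec b) = Psi A k

/-- The spectral (Euclidean operator) norm of a real matrix. -/
noncomputable def specNorm {ι : Type*} [Fintype ι] (M : Matrix ι ι ℝ) : ℝ :=
  sSup {r : ℝ | ∃ v : ι → ℝ, euclNorm v = 1 ∧ r = euclNorm (M *ᵥ v)}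

/-- The `k`-th ideal GMRES approximation `φ_k(A) = min_{p ∈ π_k} ‖p(A)‖`. -/
noncomputable def phiIdeal {ι : Type*} [Fintype ι] [DecidableEq ι]
    (A : Matrix ι ι ℝ) (k : ℕ) : ℝ :=
  sInf {r : ℝ | ∃ p : Polynomial ℝ, IsPik k p ∧ r = specNorm (Polynomial.aeval A p)}

/-- Complexification of a real matrix. -/
noncomputable def matC {ι : Type*} (A : Matrix ι ι ℝ) : Matrix ι ι ℂ :=
  A.map fun x => (x : ℂ)

/-- Complexification of a real vector. -/
noncomputable def vecC {ι : Type*} (b : ι → ℝ) : ι → ℂ := fun i => (b i : ℂ)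

/-- `Ψ_{k,ℂ,ℝ}(A)`: complex polynomials, real initial vectors. -/
noncomputable def PsiCR {ι : Type*} [Fintype ι] [DecidableEq ι]
    (A : Matrix ι ι ℝ) (k : ℕ) : ℝ :=
  sSup {r : ℝ | ∃ b : ι → ℝ, euclNorm b = 1 ∧
    r = sInf {s : ℝ | ∃ p : Polynomial ℂ, IsPikC k p ∧
      s = euclNormC ((Polynomial.aeval (matC A) p).mulVec (vecC b))}}

/-- `Ψ_{k,ℂ,ℂ}(A)`: complex polynomials, complex initial vectors. -/
noncomputable def PsiCC {ι : Type*} [Fintype ι] [DecidableEq ι]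
    (A : Matrix ι ι ℝ) (k : ℕ) : ℝ :=
  sSup {r : ℝ | ∃ b : ι → ℂ, euclNormC b = 1 ∧
    r = sInf {s : ℝ | ∃ p : Polynomial ℂ, IsPikC k p ∧
      s = euclNormC ((Polynomial.aeval (matC A) p).mulVec b)}}

/-- `Ψ_{k,ℝ,ℂ}(A)`: real polynomials, complex initial vectors. -/
noncomputable def PsiRC {ι : Type*} [Fintype ι] [DecidableEq ι]
    (A : Matrix ι ι ℝ) (k : ℕ) : ℝ :=
  sSup {r : ℝ | ∃ b : ι → ℂ, euclNormC b = 1 ∧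
    r = sInf {s : ℝ | ∃ p : Polynomial ℝ, IsPik k p ∧
      s = euclNormC ((Polynomial.aeval (matC A) (p.map (algebraMap ℝ ℂ))).mulVec b)}}

/-- `φ_{k,ℝ,ℝ}(A)`. -/
noncomputable def phiRR {ι : Type*} [Fintype ι] [DecidableEq ι]
    (A : Matrix ι ι ℝ) (k : ℕ) : ℝ :=
  sInf {r : ℝ | ∃ p : Polynomial ℝ, IsPik k p ∧
    r = sSup {s : ℝ | ∃ b : ι → ℝ, euclNorm b = 1 ∧
      s = euclNorm ((Polynomial.aeval A p).mulVec b)}}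

/-- `φ_{k,ℂ,ℝ}(A)`. -/
noncomputable def phiCR {ι : Type*} [Fintype ι] [DecidableEq ι]
    (A : Matrix ι ι ℝ) (k : ℕ) : ℝ :=
  sInf {r : ℝ | ∃ p : Polynomial ℂ, IsPikC k p ∧
    r = sSup {s : ℝ | ∃ b : ι → ℝ, euclNorm b = 1 ∧
      s = euclNormC ((Polynomial.aeval (matC A) p).mulVec (vecC b))}}

/-- `φ_{k,ℝ,ℂ}(A)`. -/
noncomputable def phiRC {ι : Type*} [Fintype ι] [DecidableEq ι]
    (A : Matrix ι ι ℝ) (k : ℕ) : ℝ :=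
  sInf {r : ℝ | ∃ p : Polynomial ℝ, IsPik k p ∧
    r = sSup {s : ℝ | ∃ b : ι → ℂ, euclNormC b = 1 ∧
      s = euclNormC ((Polynomial.aeval (matC A) (p.map (algebraMap ℝ ℂ))).mulVec b)}}

/-- `φ_{k,ℂ,ℂ}(A)`. -/
noncomputable def phiCC {ι : Type*} [Fintype ι] [DecidableEq ι]
    (A : Matrix ι ι ℝ) (k : ℕ) : ℝ :=
  sInf {r : ℝ | ∃ p : Polynomial ℂ, IsPikC k p ∧
    r = sSup {s : ℝ | ∃ b : ι → ℂ, euclNormC b = 1 ∧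
      s = euclNormC ((Polynomial.aeval (matC A) p).mulVec b)}}

/-!
Let `r = p(A)v`, `p ∈ π_k`, be the GMRES residual of a unit vector `v`. Minimality makes `r`
orthogonal to `q(A)v - r` for every `q ∈ π_k`, so that `⟨r, q(A)v⟩ = ‖r‖²`. Moving `q(A)` to the
other side gives `⟨q(Aᵀ)r, v⟩ = ‖r‖²`, and Cauchy–Schwarz yields `‖r‖ ≤ ‖q(Aᵀ)(r / ‖r‖)‖`
unless `r = 0`. Hence the GMRES value of `Aᵀ` at `r / ‖r‖` is at least that of `A` at `v`,
which gives `Ψ_k(A) ≤ Ψ_k(Aᵀ)`; equality follows by exchanging the roles of `A` and `Aᵀ`.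
-/

section InnerProductSpace

variable {E : Type*} [NormedAddCommGroup E] [InnerProductSpace ℝ E] (S : Submodule ℝ E)

theorem exists_mem_forall_norm_add_le [S.HasOrthogonalProjection] (x : E) :
    ∃ s ∈ S, ∀ t ∈ S, ‖x + s‖ ≤ ‖x + t‖ := by
  refine ⟨-S.starProjection x, S.neg_mem (S.starProjection_apply_mem x), fun t ht => ?_⟩
  have hbdd : BddBelow (Set.range fun y : S => ‖x - y‖) :=
    ⟨0, Set.forall_mem_range.mpr fun _ => norm_nonneg _⟩
  rw [← sub_eq_add_neg, Submodule.starProjection_minimal]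
  simpa only [sub_neg_eq_add] using ciInf_le hbdd ⟨-t, S.neg_mem ht⟩

variable {S}

theorem real_inner_eq_zero_of_forall_norm_le_norm_add {x : E} (hx : ∀ s ∈ S, ‖x‖ ≤ ‖x + s‖)
    {s : E} (hs : s ∈ S) : inner ℝ x s = 0 := by
  have hbdd : BddBelow (Set.range fun y : S => ‖x - y‖) :=
    ⟨0, Set.forall_mem_range.mpr fun _ => norm_nonneg _⟩
  have hmin : ‖x - 0‖ = ⨅ y : S, ‖x - y‖ :=
    le_antisymm (le_ciInf fun y => by simpa [sub_eq_add_neg] using hx _ (S.neg_mem y.2))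
      (ciInf_le hbdd 0)
  simpa only [sub_zero] using (S.norm_eq_iInf_iff_real_inner_eq_zero S.zero_mem).1 hmin s hs

end InnerProductSpace

section EuclNorm

variable {ι : Type*} [Fintype ι]

theorem euclNorm_eq_norm_toLp (v : ι → ℝ) : euclNorm v = ‖WithLp.toLp 2 v‖ := by
  simp only [euclNorm, EuclideanSpace.norm_eq, Real.norm_eq_abs, sq_abs]

theorem euclNorm_nonneg (v : ι → ℝ) : 0 ≤ euclNorm v :=
  Real.sqrt_nonneg _

theorem euclNorm_smul (c : ℝ) (v : ι → ℝ) : euclNorm (c • v) = |c| * euclNorm v := by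
  simp only [euclNorm_eq_norm_toLp, WithLp.toLp_smul, norm_smul, Real.norm_eq_abs]

theorem euclNorm_inv_smul_self {v : ι → ℝ} (hv : euclNorm v ≠ 0) :
    euclNorm ((euclNorm v)⁻¹ • v) = 1 := by
  rw [euclNorm_smul, abs_of_nonneg (inv_nonneg.2 (euclNorm_nonneg v)), inv_mul_cancel₀ hv]

theorem exists_euclNorm_eq_one [Nonempty ι] : ∃ v : ι → ℝ, euclNorm v = 1 := by
  obtain ⟨x, hx⟩ := exists_norm_eq (EuclideanSpace ℝ ι) zero_le_one
  exact ⟨x.ofLp, by rw [euclNorm_eq_norm_toLp, WithLp.toLp_ofLp, hx]⟩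

theorem dotProduct_self_eq_euclNorm_sq (v : ι → ℝ) : v ⬝ᵥ v = euclNorm v ^ 2 := by
  rw [euclNorm_eq_norm_toLp, ← real_inner_self_eq_norm_sq, EuclideanSpace.inner_toLp_toLp,
    star_trivial]

theorem dotProduct_le_euclNorm_mul_euclNorm (v w : ι → ℝ) :
    v ⬝ᵥ w ≤ euclNorm v * euclNorm w := by
  rw [euclNorm_eq_norm_toLp, euclNorm_eq_norm_toLp, dotProduct_comm]
  exact real_inner_le_norm (WithLp.toLp 2 v) (WithLp.toLp 2 w)

end EuclNorm

theorem aeval_transpose {R ι : Type*} [CommSemiring R] [Fintype ι] [DecidableEq ι]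
    (A : Matrix ι ι R) (p : R[X]) : aeval Aᵀ p = (aeval A p)ᵀ :=
  MulOpposite.op_injective <|
    (aeval_op_apply Aᵀ p).symm.trans (aeval_algHom_apply (transposeAlgEquiv ι R R) A p)

section Pik

variable {k : ℕ} {p q : ℝ[X]}

theorem isPik_one (k : ℕ) : IsPik k 1 := by
  simp only [IsPik, natDegree_one, zero_le, eval_one, and_self]

/-- The direction of the affine space `π_k`: polynomials of degree at most `k` vanishing at `0`. -/
noncomputable def pikDirection (k : ℕ) : Submodule ℝ ℝ[X] :=
  degreeLE ℝ k ⊓ LinearMap.ker (leval 0)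

theorem IsPik.isPik_iff_sub_mem (hp : IsPik k p) : IsPik k q ↔ q - p ∈ pikDirection k := by
  have hpk : p ∈ degreeLE ℝ k := mem_degreeLE.2 (natDegree_le_iff_degree_le.1 hp.1)
  rw [pikDirection, Submodule.mem_inf, Submodule.sub_mem_iff_left _ hpk, mem_degreeLE,
    ← natDegree_le_iff_degree_le, LinearMap.mem_ker, map_sub, sub_eq_zero]
  simp only [IsPik, leval_apply, hp.2]

theorem IsPik.add_mem (hp : IsPik k p) {d : ℝ[X]} (hd : d ∈ pikDirection k) : IsPik k (p + d) :=
  hp.isPik_iff_sub_mem.2 (by rwa [add_sub_cancel_left])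

end Pik

section Gmres

variable {ι : Type*} [Fintype ι] [DecidableEq ι] (A : Matrix ι ι ℝ) (k : ℕ) (b : ι → ℝ)

/-- The map `p ↦ p(A)b`, valued in `EuclideanSpace` so that orthogonal projections are
available. -/
noncomputable def aevalMulVec : ℝ[X] →ₗ[ℝ] EuclideanSpace ℝ ι :=
  (WithLp.linearEquiv 2 ℝ (ι → ℝ)).symm.toLinearMap ∘ₗ (mulVecBilin ℝ ℝ).flip b ∘ₗ
    (aeval A).toLinearMap

theorem aevalMulVec_apply (p : ℝ[X]) : aevalMulVec A b p = WithLp.toLp 2 (aeval A p *ᵥ b) :=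
  rfl

theorem norm_aevalMulVec (p : ℝ[X]) : ‖aevalMulVec A b p‖ = euclNorm (aeval A p *ᵥ b) :=
  (euclNorm_eq_norm_toLp _).symm

theorem exists_isGmresRes : ∃ r, IsGmresRes A k b r := by
  obtain ⟨_, ⟨d, hd, rfl⟩, hmin⟩ :=
    exists_mem_forall_norm_add_le ((pikDirection k).map (aevalMulVec A b)) (aevalMulVec A b 1)
  refine ⟨_, 1 + d, (isPik_one k).add_mem hd, rfl, fun q hq => ?_⟩
  have hq' := hmin _ (Submodule.mem_map_of_mem ((isPik_one k).isPik_iff_sub_mem.1 hq))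
  rwa [← map_add, ← map_add, add_sub_cancel, norm_aevalMulVec, norm_aevalMulVec] at hq'

variable {A k b} {p : ℝ[X]} {r : ι → ℝ}

theorem IsGmresRes.dotProduct_aeval_mulVec (hr : IsGmresRes A k b r) (hp : IsPik k p) :
    r ⬝ᵥ (aeval A p *ᵥ b) = euclNorm r ^ 2 := by
  obtain ⟨p₀, hp₀, rfl, hmin⟩ := hr
  have hmin' : ∀ s ∈ (pikDirection k).map (aevalMulVec A b),
      ‖aevalMulVec A b p₀‖ ≤ ‖aevalMulVec A b p₀ + s‖ := by
    rintro _ ⟨d, hd, rfl⟩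
    rw [← map_add, norm_aevalMulVec, norm_aevalMulVec]
    exact hmin _ (hp₀.add_mem hd)
  have horth : inner ℝ (aevalMulVec A b p₀) (aevalMulVec A b (p - p₀)) = 0 :=
    real_inner_eq_zero_of_forall_norm_le_norm_add hmin'
      (Submodule.mem_map_of_mem (hp₀.isPik_iff_sub_mem.1 hp))
  rw [map_sub, inner_sub_right, sub_eq_zero, real_inner_self_eq_norm_sq, norm_aevalMulVec] at horth
  rw [← horth, aevalMulVec_apply, aevalMulVec_apply, EuclideanSpace.inner_toLp_toLp, star_trivial,
    dotProduct_comm]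

theorem gmresVal_nonneg (A : Matrix ι ι ℝ) (k : ℕ) (b : ι → ℝ) : 0 ≤ gmresVal A k b :=
  Real.sInf_nonneg fun _ ⟨_, _, hs⟩ => hs ▸ euclNorm_nonneg _

theorem gmresVal_le (hp : IsPik k p) : gmresVal A k b ≤ euclNorm (aeval A p *ᵥ b) :=
  csInf_le ⟨0, fun _ ⟨_, _, hs⟩ => hs ▸ euclNorm_nonneg _⟩ ⟨p, hp, rfl⟩

theorem le_gmresVal {c : ℝ} (h : ∀ p, IsPik k p → c ≤ euclNorm (aeval A p *ᵥ b)) :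
    c ≤ gmresVal A k b :=
  le_csInf ⟨_, 1, isPik_one k, rfl⟩ fun _ ⟨p, hp, hs⟩ => hs ▸ h p hp

theorem gmresVal_le_euclNorm (A : Matrix ι ι ℝ) (k : ℕ) (b : ι → ℝ) :
    gmresVal A k b ≤ euclNorm b := by
  simpa only [map_one, one_mulVec] using gmresVal_le (A := A) (b := b) (isPik_one k)

theorem IsGmresRes.gmresVal_eq (hr : IsGmresRes A k b r) : gmresVal A k b = euclNorm r := by
  obtain ⟨p, hp, rfl, hmin⟩ := hr
  exact le_antisymm (gmresVal_le hp) (le_gmresVal hmin)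

theorem IsGmresRes.euclNorm_sq_le (hr : IsGmresRes A k b r) (hp : IsPik k p) :
    euclNorm r ^ 2 ≤ euclNorm (aeval Aᵀ p *ᵥ r) * euclNorm b :=
  calc euclNorm r ^ 2
    _ = r ⬝ᵥ (aeval A p *ᵥ b) := (hr.dotProduct_aeval_mulVec hp).symm
    _ = (aeval Aᵀ p *ᵥ r) ⬝ᵥ b := by rw [aeval_transpose, mulVec_transpose, dotProduct_mulVec]
    _ ≤ euclNorm (aeval Aᵀ p *ᵥ r) * euclNorm b := dotProduct_le_euclNorm_mul_euclNorm _ _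

theorem IsGmresRes.euclNorm_le_gmresVal_transpose (hr : IsGmresRes A k b r) (hb : euclNorm b = 1) :
    euclNorm r ≤ gmresVal Aᵀ k ((euclNorm r)⁻¹ • r) := by
  refine le_gmresVal fun p hp => ?_
  have hsq := hr.euclNorm_sq_le hp
  rw [hb, mul_one] at hsq
  rw [mulVec_smul, euclNorm_smul, abs_of_nonneg (inv_nonneg.2 (euclNorm_nonneg r))]
  calc euclNorm r
    _ = (euclNorm r)⁻¹ * euclNorm r ^ 2 := by rw [sq, ← mul_assoc, inv_mul_mul_self]
    _ ≤ (euclNorm r)⁻¹ * euclNorm (aeval Aᵀ p *ᵥ r) :=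
      mul_le_mul_of_nonneg_left hsq (inv_nonneg.2 (euclNorm_nonneg r))

theorem exists_gmresVal_le_gmresVal_transpose (A : Matrix ι ι ℝ) (k : ℕ) (hb : euclNorm b = 1) :
    ∃ w, euclNorm w = 1 ∧ gmresVal A k b ≤ gmresVal Aᵀ k w := by
  obtain ⟨r, hr⟩ := exists_isGmresRes A k b
  rw [hr.gmresVal_eq]
  rcases eq_or_ne (euclNorm r) 0 with hr₀ | hr₀
  · exact ⟨b, hb, hr₀ ▸ gmresVal_nonneg Aᵀ k b⟩
  · exact ⟨_, euclNorm_inv_smul_self hr₀, hr.euclNorm_le_gmresVal_transpose hb⟩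

theorem gmresVal_le_Psi (A : Matrix ι ι ℝ) (k : ℕ) (hb : euclNorm b = 1) :
    gmresVal A k b ≤ Psi A k :=
  le_csSup ⟨1, fun _ ⟨v, hv, hs⟩ => hs ▸ hv ▸ gmresVal_le_euclNorm A k v⟩ ⟨b, hb, rfl⟩

theorem Psi_le_Psi_transpose [Nonempty ι] (A : Matrix ι ι ℝ) (k : ℕ) : Psi A k ≤ Psi Aᵀ k := by
  obtain ⟨v₀, hv₀⟩ := exists_euclNorm_eq_one (ι := ι)
  refine csSup_le ⟨_, v₀, hv₀, rfl⟩ ?_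
  rintro _ ⟨v, hv, rfl⟩
  obtain ⟨w, hw, hle⟩ := exists_gmresVal_le_gmresVal_transpose A k hv
  exact hle.trans (gmresVal_le_Psi Aᵀ k hw)

theorem nonempty_of_dA_pos {A : Matrix ι ι ℝ} (hA : 0 < dA A) : Nonempty ι := by
  by_contra hι
  rw [not_nonempty_iff] at hι
  have hA₀ : dA A = 0 := by rw [dA, minpoly.subsingleton, natDegree_one]
  exact hA.ne' hA₀

theorem worst_case_gmres_transpose_general [Nonempty ι] (A : Matrix ι ι ℝ) (k : ℕ) :
    Psi A k = Psi Aᵀ k :=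
  le_antisymm (Psi_le_Psi_transpose A k) <| by
    simpa only [transpose_transpose] using Psi_le_Psi_transpose Aᵀ k

end Gmres

/-- For a nonsingular `A ∈ ℝ^{n×n}` and `1 ≤ k ≤ d(A) - 1`,
`Ψ_k(A) = Ψ_k(Aᵀ)`. -/
theorem worst_case_gmres_transpose {n : ℕ} (A : Matrix (Fin n) (Fin n) ℝ)
    (hA : IsUnit A) (k : ℕ) (hk1 : 1 ≤ k) (hk2 : k ≤ dA A - 1) :
    Psi A k = Psi Aᵀ k := by
  have : Nonempty (Fin n) := nonempty_of_dA_pos (A := A) (by lia)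
  exact worst_case_gmres_transpose_general A k
end

section
/- Let A ∈ ℝ^{n×n} be nonsingular and 1 ≤ k < d(A). The function g(v) = min_{c ∈ ℝ^k} ‖v − K(v)c‖² is continuous on ℝ^n and infinitely differentiable on the open set Ω = {v ∈ ℝ^n : d(A, v) ≥ k}. Moreover, the set Γ = {v ∈ ℝ^n : d(A, v) < k} is closed and has Lebesgue measure zero in ℝ^n. -/
open Polynomial Matrix

/-!
The points `v` with `d(A,v) < k` are those annihilated by `p(A)` for a monic divisor `p` of the
minimal polynomial of `A` with `deg p < k`. There are finitely many such `p`, and `p(A) ≠ 0`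
when `k ≤ d(A)`, so `Γ` is a finite union of proper subspaces.

On `Ω` the columns of `K(v)` are linearly independent and `g(v)` is the quotient of the Gram
determinants of `[v, Av, …, A^k v]` and `[Av, …, A^k v]`, which are polynomials in `v`. On `Γ` some
`c` satisfies `K(v)c = v`, because `A` is nonsingular; hence `g(v) = 0`, and continuity at `v`
follows by squeezing `g` between `0` and `w ↦ ‖w - K(w)c‖²`.
-/

section GramDeterminant

variable {m n R : Type*} [Fintype m] [Fintype n] [DecidableEq n]

/-- The Gram determinant `det (KᵀK)` of the columns of `K`. -/
def gramDet [CommRing R] (K : Matrix m n R) : R := (Kᵀ * K).det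

theorem gramDet_ne_zero {K : Matrix m n ℝ} (hK : Function.Injective K.mulVec) :
    gramDet K ≠ 0 := by
  have hpos : (Kᴴ * K).PosDef := .conjTranspose_mul_self K hK
  rw [conjTranspose_eq_transpose_of_trivial] at hpos
  exact hpos.det_pos.ne'

theorem gramDet_fromCols_replicateCol [CommRing R] (K : Matrix m n R) (v : m → R) (c : n → R)
    (hc : Kᵀ *ᵥ (v - K *ᵥ c) = 0) :
    gramDet (fromCols (replicateCol Unit v) K) =
      ((v - K *ᵥ c) ⬝ᵥ (v - K *ᵥ c)) * gramDet K := by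
  set r := v - K *ᵥ c with hr
  set P : Matrix (Unit ⊕ n) (Unit ⊕ n) R := fromBlocks 1 0 (replicateCol Unit c) 1 with hP
  have hfactor : fromCols (replicateCol Unit v) K = fromCols (replicateCol Unit r) K * P := by
    rw [hP, fromCols_mul_fromBlocks, ← replicateCol_mulVec, Matrix.mul_one, Matrix.mul_zero,
      Matrix.mul_one, zero_add, ← replicateCol_add, hr, sub_add_cancel]
  have horth : Kᵀ * replicateCol Unit r = 0 := by
    rw [← replicateCol_mulVec, hc, replicateCol_zero]
  have hgram : (fromCols (replicateCol Unit r) K)ᵀ * fromCols (replicateCol Unit r) K =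
      fromBlocks (of fun _ _ ↦ r ⬝ᵥ r) ((replicateCol Unit r)ᵀ * K) 0 (Kᵀ * K) := by
    rw [transpose_fromCols, fromRows_mul_fromCols, horth, transpose_replicateCol,
      replicateRow_mul_replicateCol]
  have hunipotent : P.det = 1 := by
    rw [hP, det_fromBlocks_zero₁₂, det_one, det_one, one_mul]
  rw [gramDet, hfactor, transpose_mul, Matrix.mul_assoc, det_mul, ← Matrix.mul_assoc, det_mul,
    det_transpose, hunipotent, one_mul, mul_one, hgram, det_fromBlocks_zero₂₁, det_unique,
    of_apply, gramDet]

variable {𝕜 E 𝔸 : Type*} [NontriviallyNormedField 𝕜] [NormedAddCommGroup E] [NormedSpace 𝕜 E]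
  [NormedCommRing 𝔸] [NormedAlgebra 𝕜 𝔸] {N : WithTop ℕ∞}

theorem contDiff_matrix_det {M : E → Matrix n n 𝔸} (hM : ∀ i j, ContDiff 𝕜 N fun x ↦ M x i j) :
    ContDiff 𝕜 N fun x ↦ (M x).det := by
  simp only [det_apply']
  exact .sum fun σ _ ↦ contDiff_const.mul (contDiff_prod fun i _ ↦ hM _ _)

theorem contDiff_gramDet {K : E → Matrix m n 𝔸} (hK : ∀ i j, ContDiff 𝕜 N fun x ↦ K x i j) :
    ContDiff 𝕜 N fun x ↦ gramDet (K x) := by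
  refine contDiff_matrix_det fun i j ↦ ?_
  simp only [mul_apply, transpose_apply]
  exact .sum fun l _ ↦ (hK l i).mul (hK l j)

end GramDeterminant

section LeastSquares

variable {m n : Type*} [Fintype m] [Fintype n]

theorem euclNorm_sq (v : m → ℝ) : euclNorm v ^ 2 = v ⬝ᵥ v := by
  rw [euclNorm, Real.sq_sqrt (Finset.sum_nonneg fun i _ ↦ sq_nonneg _)]
  simp only [dotProduct, sq]

theorem euclNorm_sub_mulVec_sq_le (K : Matrix m n ℝ) {v : m → ℝ} {c : n → ℝ}
    (hc : Kᵀ *ᵥ (v - K *ᵥ c) = 0) (d : n → ℝ) :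
    euclNorm (v - K *ᵥ c) ^ 2 ≤ euclNorm (v - K *ᵥ d) ^ 2 := by
  set r := v - K *ᵥ c with hr
  set w := K *ᵥ (c - d) with hw
  have horth : r ⬝ᵥ w = 0 := by
    rw [hw, dotProduct_mulVec, ← mulVec_transpose, hc, zero_dotProduct]
  have hsplit : v - K *ᵥ d = r + w := by
    rw [hr, hw, mulVec_sub]
    abel
  calc euclNorm r ^ 2 ≤ euclNorm r ^ 2 + euclNorm w ^ 2 := le_add_of_nonneg_right (sq_nonneg _)
    _ = euclNorm (v - K *ᵥ d) ^ 2 := by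
      simp only [hsplit, euclNorm_sq, add_dotProduct, dotProduct_add, dotProduct_comm w r, horth]
      ring

theorem isLeast_euclNorm_sub_mulVec_sq [DecidableEq n] {K : Matrix m n ℝ}
    (hK : Function.Injective K.mulVec) (v : m → ℝ) :
    IsLeast {s : ℝ | ∃ c : n → ℝ, s = euclNorm (v - K *ᵥ c) ^ 2}
      (gramDet (fromCols (replicateCol Unit v) K) / gramDet K) := by
  have hdet : gramDet K ≠ 0 := gramDet_ne_zero hK
  set γ : n → ℝ := (Kᵀ * K)⁻¹ *ᵥ (Kᵀ *ᵥ v)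
  have hγ : Kᵀ *ᵥ (v - K *ᵥ γ) = 0 := by
    rw [mulVec_sub, mulVec_mulVec, mulVec_mulVec, mul_nonsing_inv _ hdet.isUnit, one_mulVec,
      sub_self]
  rw [gramDet_fromCols_replicateCol K v γ hγ, mul_div_cancel_right₀ _ hdet, ← euclNorm_sq]
  refine ⟨⟨γ, rfl⟩, ?_⟩
  rintro _ ⟨d, rfl⟩
  exact euclNorm_sub_mulVec_sq_le K hγ d

end LeastSquares

section MinimalDegree

variable {ι : Type*} [Fintype ι] [DecidableEq ι]

theorem exists_monic_dvd_minpoly_aeval_mulVec_eq_zero {F : Type*} [Field F] (A : Matrix ι ι F)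
    {v : ι → F} {q : F[X]} (hq : q ≠ 0) (hqv : aeval A q *ᵥ v = 0) :
    ∃ p : F[X], (p.Monic ∧ p ∣ minpoly F A) ∧ p ∣ q ∧ aeval A p *ᵥ v = 0 := by
  classical
  set d := EuclideanDomain.gcd q (minpoly F A) with hd
  have hdq : d ∣ q := EuclideanDomain.gcd_dvd_left _ _
  have hdv : aeval A d *ᵥ v = 0 := by
    rw [hd, EuclideanDomain.gcd_eq_gcd_ab, mul_comm q, map_add, map_mul, map_mul, minpoly.aeval,
      zero_mul, add_zero, ← mulVec_mulVec, hqv, mulVec_zero]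
  obtain ⟨e, he⟩ : d ∣ normalize d := (normalize_associated d).symm.dvd
  refine ⟨normalize d, ⟨monic_normalize (ne_zero_of_dvd_ne_zero hq hdq),
    normalize_dvd_iff.2 (EuclideanDomain.gcd_dvd_right _ _)⟩, normalize_dvd_iff.2 hdq, ?_⟩
  rw [he, mul_comm, map_mul, ← mulVec_mulVec, hdv, mulVec_zero]

theorem dAb_lt_iff {A : Matrix ι ι ℝ} {k : ℕ} {v : ι → ℝ} :
    dAb A v < k ↔ ∃ q : ℝ[X], q ≠ 0 ∧ q.natDegree < k ∧ aeval A q *ᵥ v = 0 := by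
  have hne : {d : ℕ | ∃ q : ℝ[X], q ≠ 0 ∧ q.natDegree = d ∧ aeval A q *ᵥ v = 0}.Nonempty :=
    ⟨_, minpoly ℝ A, minpoly.ne_zero (Matrix.isIntegral A), rfl, by
      rw [minpoly.aeval, zero_mulVec]⟩
  rw [dAb, csInf_lt_iff (OrderBot.bddBelow _) hne]
  constructor
  · rintro ⟨_, ⟨q, hq, rfl, hqv⟩, hqk⟩
    exact ⟨q, hq, hqk, hqv⟩
  · rintro ⟨q, hq, hqk, hqv⟩
    exact ⟨_, ⟨q, hq, rfl, hqv⟩, hqk⟩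

theorem eq_zero_of_aeval_mulVec_eq_zero {A : Matrix ι ι ℝ} {k : ℕ} {v : ι → ℝ}
    (hv : k ≤ dAb A v) {p : ℝ[X]} (hp : p ∈ degreeLT ℝ k) (hpv : aeval A p *ᵥ v = 0) :
    p = 0 := by
  by_contra hp0
  have hpk : p.natDegree < k := (natDegree_lt_iff_degree_lt hp0).2 (mem_degreeLT.1 hp)
  exact hv.not_gt (dAb_lt_iff.2 ⟨p, hp0, hpk, hpv⟩)

theorem exists_isPik_aeval_mulVec_eq_zero {A : Matrix ι ι ℝ} (hA : IsUnit A) {k : ℕ} {v : ι → ℝ}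
    (hv : dAb A v < k) : ∃ p : ℝ[X], IsPik k p ∧ aeval A p *ᵥ v = 0 := by
  obtain ⟨q, hq, hqk, hqv⟩ := dAb_lt_iff.1 hv
  obtain ⟨r, hqr, hr⟩ := exists_eq_pow_rootMultiplicity_mul_and_not_dvd q hq 0
  generalize q.rootMultiplicity 0 = m at hqr
  rw [map_zero, sub_zero] at hqr hr
  rw [X_dvd_iff, coeff_zero_eq_eval_zero] at hr
  have hrk : r.natDegree ≤ k :=
    (natDegree_le_of_dvd (Dvd.intro_left _ hqr.symm) hq).trans hqk.le
  have hrv : aeval A r *ᵥ v = 0 := by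
    rw [hqr, map_mul, map_pow, aeval_X, ← mulVec_mulVec] at hqv
    exact mulVec_injective_of_isUnit (hA.pow m) (hqv.trans (mulVec_zero _).symm)
  refine ⟨C (r.eval 0)⁻¹ * r, ⟨(natDegree_C_mul_le _ _).trans hrk, ?_⟩, ?_⟩
  · rw [eval_mul, eval_C, inv_mul_cancel₀ hr]
  · rw [map_mul, ← mulVec_mulVec, hrv, mulVec_zero]

/-- The monic divisors of degree less than `k` of the minimal polynomial of `A`; they index the
subspaces `ker p(A)` whose union is `{v | d(A,v) < k}`. -/
def minpolyDivisors {F : Type*} [Field F] (A : Matrix ι ι F) (k : ℕ) : Set F[X] :=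
  {p | (p.Monic ∧ p ∣ minpoly F A) ∧ p.natDegree < k}

theorem finite_minpolyDivisors {F : Type*} [Field F] (A : Matrix ι ι F) (k : ℕ) :
    (minpolyDivisors A k).Finite := by
  have : Fintype {p : F[X] // p.Monic ∧ p ∣ minpoly F A} :=
    fintypeSubtypeMonicDvd _ (minpoly.ne_zero (Matrix.isIntegral A))
  exact (Set.finite_coe_iff.1 (Finite.of_fintype {p : F[X] // p.Monic ∧ p ∣ minpoly F A})).subset
    fun p hp ↦ hp.1

theorem setOfPred_dAb_lt_eq_biUnion_ker (A : Matrix ι ι ℝ) (k : ℕ) :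
    {v : ι → ℝ | dAb A v < k} =
      ⋃ p ∈ minpolyDivisors A k, (LinearMap.ker (aeval A p).mulVecLin : Set (ι → ℝ)) := by
  ext v
  simp only [Set.mem_ofPred_eq, Set.mem_iUnion, SetLike.mem_coe, LinearMap.mem_ker,
    mulVecLin_apply, exists_prop, dAb_lt_iff]
  constructor
  · rintro ⟨q, hq, hqk, hqv⟩
    obtain ⟨p, hp, hpq, hpv⟩ := exists_monic_dvd_minpoly_aeval_mulVec_eq_zero A hq hqv
    exact ⟨p, ⟨hp, (natDegree_le_of_dvd hpq hq).trans_lt hqk⟩, hpv⟩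
  · rintro ⟨p, ⟨⟨hp, -⟩, hpk⟩, hpv⟩
    exact ⟨p, hp.ne_zero, hpk, hpv⟩

theorem isClosed_setOfPred_dAb_lt (A : Matrix ι ι ℝ) (k : ℕ) :
    IsClosed {v : ι → ℝ | dAb A v < k} := by
  rw [setOfPred_dAb_lt_eq_biUnion_ker]
  exact (finite_minpolyDivisors A k).isClosed_biUnion
    fun p _ ↦ Submodule.closed_of_finiteDimensional _

theorem isOpen_setOfPred_le_dAb (A : Matrix ι ι ℝ) (k : ℕ) :
    IsOpen {v : ι → ℝ | k ≤ dAb A v} := by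
  simpa only [Set.compl_ofPred, not_lt] using (isClosed_setOfPred_dAb_lt A k).isOpen_compl

theorem volume_setOfPred_dAb_lt {A : Matrix ι ι ℝ} {k : ℕ} (hk : k ≤ dA A) :
    MeasureTheory.volume {v : ι → ℝ | dAb A v < k} = 0 := by
  rw [setOfPred_dAb_lt_eq_biUnion_ker,
    MeasureTheory.measure_biUnion_null_iff (finite_minpolyDivisors A k).countable]
  rintro p ⟨⟨hp, -⟩, hpk⟩
  refine MeasureTheory.Measure.addHaar_submodule _ _ fun htop ↦ ?_
  have hpA : aeval A p = 0 := by
    rwa [LinearMap.ker_eq_top, ← toLin'_apply', LinearEquiv.map_eq_zero_iff] at htop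
  exact hpk.not_ge (hk.trans (natDegree_le_natDegree (minpoly.min ℝ A hp hpA)))

end MinimalDegree

section KrylovMatrix

variable {n : ℕ} {A : Matrix (Fin n) (Fin n) ℝ} {k : ℕ} {v : Fin n → ℝ}

theorem Kmat_mulVec_degreeLTEquiv (A : Matrix (Fin n) (Fin n) ℝ) (v : Fin n → ℝ)
    (p : degreeLT ℝ k) :
    Kmat A k v *ᵥ degreeLTEquiv ℝ k p = aeval A (X * (p : ℝ[X])) *ᵥ v := by
  obtain ⟨c, rfl⟩ := (degreeLTEquiv ℝ k).symm.surjective p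
  rw [LinearEquiv.apply_symm_apply]
  have hp : ((degreeLTEquiv ℝ k).symm c : ℝ[X]) = ∑ j : Fin k, monomial j (c j) := rfl
  calc Kmat A k v *ᵥ c = ∑ j : Fin k, c j • (A ^ ((j : ℕ) + 1) *ᵥ v) := by
        ext i
        simp only [Kmat, mulVec, dotProduct, of_apply, Finset.sum_apply, Pi.smul_apply,
          smul_eq_mul, mul_comm (c _)]
    _ = aeval A (X * ((degreeLTEquiv ℝ k).symm c : ℝ[X])) *ᵥ v := by
        simp only [hp, map_mul, aeval_X, map_sum, Finset.mul_sum, sum_mulVec, aeval_monomial,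
          ← Algebra.smul_def, mul_smul_comm, ← pow_succ', smul_mulVec]

theorem Kmat_mulVec_injective (hA : IsUnit A) (hv : k ≤ dAb A v) :
    Function.Injective (Kmat A k v).mulVec := by
  refine (injective_iff_map_eq_zero (Kmat A k v).mulVecLin).2 fun c hc ↦ ?_
  obtain ⟨p, rfl⟩ := (degreeLTEquiv ℝ k).surjective c
  rw [mulVecLin_apply, Kmat_mulVec_degreeLTEquiv, map_mul, aeval_X, ← mulVec_mulVec] at hc
  have hpv : aeval A (p : ℝ[X]) *ᵥ v = 0 :=
    mulVec_injective_of_isUnit hA (hc.trans (mulVec_zero A).symm)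
  have hp : p = 0 := Subtype.ext (eq_zero_of_aeval_mulVec_eq_zero hv p.2 hpv)
  rw [hp, map_zero]

theorem exists_sub_Kmat_mulVec_eq_aeval_mulVec (A : Matrix (Fin n) (Fin n) ℝ) (v : Fin n → ℝ)
    {p : ℝ[X]} (hp : IsPik k p) : ∃ c, v - Kmat A k v *ᵥ c = aeval A p *ᵥ v := by
  have hdeg : p.divX ∈ degreeLT ℝ k := by
    rw [mem_degreeLT, degree_lt_iff_coeff_zero]
    intro m hm
    rw [coeff_divX]
    exact coeff_eq_zero_of_natDegree_lt (by have := hp.1; lia)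
  have hp0 : X * p.divX + 1 = p := by
    simpa only [coeff_zero_eq_eval_zero, hp.2, map_one] using X_mul_divX_add p
  refine ⟨degreeLTEquiv ℝ k (-⟨p.divX, hdeg⟩), ?_⟩
  rw [map_neg, mulVec_neg, sub_neg_eq_add, Kmat_mulVec_degreeLTEquiv]
  conv_rhs => rw [← hp0, map_add, map_one, add_mulVec, one_mulVec, add_comm]

theorem contDiff_Kmat_apply (A : Matrix (Fin n) (Fin n) ℝ) {N : WithTop ℕ∞} (i : Fin n)
    (j : Fin k) : ContDiff ℝ N fun v ↦ Kmat A k v i j := by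
  simp only [Kmat, of_apply, mulVec, dotProduct]
  fun_prop

theorem gFun_eq_gramDet_div (hA : IsUnit A) (hv : k ≤ dAb A v) :
    gFun A k v =
      gramDet (fromCols (replicateCol Unit v) (Kmat A k v)) / gramDet (Kmat A k v) :=
  (isLeast_euclNorm_sub_mulVec_sq (Kmat_mulVec_injective hA hv) v).csInf_eq

theorem contDiffOn_gFun (hA : IsUnit A) {N : WithTop ℕ∞} :
    ContDiffOn ℝ N (gFun A k) {v | k ≤ dAb A v} := by
  refine ContDiffOn.congr (.div (ContDiff.contDiffOn ?_) (ContDiff.contDiffOn ?_) ?_)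
    fun v hv ↦ gFun_eq_gramDet_div hA hv
  · refine contDiff_gramDet fun i j ↦ ?_
    cases j with
    | inl _ => exact contDiff_apply ℝ ℝ i
    | inr j => exact contDiff_Kmat_apply A i j
  · exact contDiff_gramDet (contDiff_Kmat_apply A)
  · exact fun v hv ↦ gramDet_ne_zero (Kmat_mulVec_injective hA hv)

theorem gFun_nonneg (A : Matrix (Fin n) (Fin n) ℝ) (k : ℕ) (v : Fin n → ℝ) : 0 ≤ gFun A k v :=
  Real.sInf_nonneg (by rintro _ ⟨c, rfl⟩; positivity)

theorem gFun_le (A : Matrix (Fin n) (Fin n) ℝ) (v : Fin n → ℝ) (c : Fin k → ℝ) :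
    gFun A k v ≤ euclNorm (v - Kmat A k v *ᵥ c) ^ 2 :=
  csInf_le ⟨0, by rintro _ ⟨d, rfl⟩; positivity⟩ ⟨c, rfl⟩

theorem continuous_euclNorm_sub_Kmat_mulVec_sq (A : Matrix (Fin n) (Fin n) ℝ) (c : Fin k → ℝ) :
    Continuous fun v ↦ euclNorm (v - Kmat A k v *ᵥ c) ^ 2 := by
  have hK : Continuous fun v ↦ Kmat A k v :=
    continuous_matrix fun i j ↦ (contDiff_Kmat_apply A i j (N := 0)).continuous
  have hr : Continuous fun v ↦ v - Kmat A k v *ᵥ c :=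
    continuous_id.sub (hK.matrix_mulVec continuous_const)
  simpa only [euclNorm_sq] using hr.dotProduct hr

theorem continuousAt_gFun_of_dAb_lt (hA : IsUnit A) (hv : dAb A v < k) :
    ContinuousAt (gFun A k) v := by
  obtain ⟨p, hp, hpv⟩ := exists_isPik_aeval_mulVec_eq_zero hA hv
  obtain ⟨c, hc⟩ := exists_sub_Kmat_mulVec_eq_aeval_mulVec A v hp
  have hres : euclNorm (v - Kmat A k v *ᵥ c) ^ 2 = 0 := by
    rw [hc, hpv, euclNorm_sq, dotProduct_zero]
  have hgv : gFun A k v = 0 := ((gFun_le A v c).trans_eq hres).antisymm (gFun_nonneg A k v)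
  have hlim := (continuous_euclNorm_sub_Kmat_mulVec_sq A c).tendsto v
  rw [hres] at hlim
  rw [ContinuousAt, hgv]
  exact squeeze_zero (gFun_nonneg A k) (fun w ↦ gFun_le A w c) hlim

theorem continuous_gFun (hA : IsUnit A) : Continuous (gFun A k) := by
  refine continuous_iff_continuousAt.2 fun v ↦ ?_
  rcases le_or_gt k (dAb A v) with hv | hv
  · have hsmooth : ContDiffOn ℝ 0 (gFun A k) {w | k ≤ dAb A w} := contDiffOn_gFun hA
    exact hsmooth.continuousOn.continuousAt ((isOpen_setOfPred_le_dAb A k).mem_nhds hv)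
  · exact continuousAt_gFun_of_dAb_lt hA hv

end KrylovMatrix

/-- `g(v) = min_c ‖v - K(v)c‖²` is continuous on `ℝ^n` and infinitely
differentiable on the open set `Ω = {v : d(A,v) ≥ k}`; moreover `Γ = {v : d(A,v) < k}` is
closed and has Lebesgue measure zero. -/
theorem gmres_value_regularity {n : ℕ} (A : Matrix (Fin n) (Fin n) ℝ)
    (hA : IsUnit A) (k : ℕ) (hk1 : 1 ≤ k) (hk2 : k < dA A) :
    Continuous (gFun A k) ∧
    IsOpen {v : Fin n → ℝ | k ≤ dAb A v} ∧
    ContDiffOn ℝ (⊤ : ℕ∞) (gFun A k) {v : Fin n → ℝ | k ≤ dAb A v} ∧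
    IsClosed {v : Fin n → ℝ | dAb A v < k} ∧
    MeasureTheory.volume {v : Fin n → ℝ | dAb A v < k} = 0 :=
  ⟨continuous_gFun hA, isOpen_setOfPred_le_dAb A k, contDiffOn_gFun hA,
    isClosed_setOfPred_dAb_lt A k, volume_setOfPred_dAb_lt hk2.le⟩
end
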